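/- Let S be a positive signature, 𝕂 a field of characteristic zero, and f', f'' reduced S-forests. Then in the algebra N(S) one has F_{f'} · F_{f''} = Σ_f F_f, where the sum ranges over all reduced S-forests f with f' ▽ f'' ≼ f ≼ f' △ f''. -/

import Mathlib

open scoped BigOperators

/-- An `S`-term over a signature given by a type `S` of generators with arity map `ar`. -/
inductive STerm (S : Type) (ar : S → ℕ) : Type
  | leaf : STerm S ar
  | node (g : S) (c : Fin (ar g) → STerm S ar) : STerm S ar

namespace STerm

variable {S : Type} {ar : S → ℕ}

/-- The arity of a term: its number of leaves. -/
def arity : STerm S ar → ℕ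
  | leaf => 1
  | node _ c => ∑ i, (c i).arity

/-- The degree of a term: its number of internal nodes. -/
def degree : STerm S ar → ℕ
  | leaf => 0
  | node _ c => 1 + ∑ i, (c i).degree

/-- The word of decorations of internal nodes along left-to-right preorder traversal. -/
def decs : STerm S ar → List S
  | leaf => []
  | node g c => g :: (List.ofFn fun i => (c i).decs).flatten

/-- Grafting `t⟨l⟩`: the `i`-th leaf (left-to-right) is replaced by the `i`-th entry of `l`. -/
def graftList : STerm S ar → List (STerm S ar) → STerm S ar
  | leaf, l => l.headD leaf
  | node g c, l =>
      node g fun i =>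
        (c i).graftList
          ((l.drop (∑ j : Fin (ar g), if (j : ℕ) < (i : ℕ) then (c j).arity else 0)).take
            (c i).arity)

/-- Grafting a term at the rightmost leaf. -/
def graftRight : STerm S ar → STerm S ar → STerm S ar
  | leaf, s => s
  | node g c, s => node g fun i => if (i : ℕ) = ar g - 1 then (c i).graftRight s else c i

/-- Grafting a term at the leftmost (first) leaf, i.e. `∘₁`. -/
def graftFirst : STerm S ar → STerm S ar → STerm S ar
  | leaf, s => s
  | node g c, s => node g fun i => if (i : ℕ) = 0 then (c i).graftFirst s else c i

/-- Preorder traversal word: `none` for leaves, `some g` for an internal node decorated by `g`. -/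
def preo : STerm S ar → List (Option S)
  | leaf => [none]
  | node g c => some g :: (List.ofFn fun i => (c i).preo).flatten

/-- The number of extremal leaves of a term: leaves which come after every internal
node in the preorder traversal. -/
def extremalCount (t : STerm S ar) : ℕ :=
  (t.preo.reverse.takeWhile fun o => o.isNone).length

/-- The list of edges `(i, j, i')` (`i'` is the `j`-th child of `i`, `j` being 1-based) between
internal nodes, internal nodes being numbered from `0` in preorder. -/
def edges : STerm S ar → List (ℕ × ℕ × ℕ)
  | leaf => []
  | node g c =>
      (List.ofFn fun i : Fin (ar g) =>
        (match c i with
          | leaf => ([] : List (ℕ × ℕ × ℕ))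
          | node _ _ =>
            [(0, (i : ℕ) + 1,
               1 + ∑ j : Fin (ar g), if (j : ℕ) < (i : ℕ) then (c j).degree else 0)]) ++
          (c i).edges.map fun e =>
            (e.1 + (1 + ∑ j : Fin (ar g), if (j : ℕ) < (i : ℕ) then (c j).degree else 0), e.2.1,
              e.2.2 + (1 + ∑ j : Fin (ar g), if (j : ℕ) < (i : ℕ) then (c j).degree else 0))).flatten

/-- The easterly wind move inside a term: a subterm rooted at an internal node which has an
immediate left sibling is detached (replaced by a leaf) and grafted onto the rightmost leaf of
the subtree rooted at this left sibling. -/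
inductive TermMove : STerm S ar → STerm S ar → Prop
  | here (g : S) (c : Fin (ar g) → STerm S ar) (j j' : Fin (ar g))
      (hj : (j' : ℕ) = (j : ℕ) + 1) (hne : c j' ≠ leaf) :
      TermMove (node g c)
        (node g (Function.update (Function.update c j ((c j).graftRight (c j'))) j' leaf))
  | child (g : S) (c : Fin (ar g) → STerm S ar) (i : Fin (ar g)) (t' : STerm S ar) :
      TermMove (c i) t' → TermMove (node g c) (node g (Function.update c i t'))

end STerm
section Forest

variable {S : Type} {ar : S → ℕ}

/-- A forest is reduced when none of its trees is a leaf. -/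
def IsReducedF (f : List (STerm S ar)) : Prop := ∀ t ∈ f, t ≠ STerm.leaf

/-- The easterly wind move on forests: either the root of a tree having an immediate left
sibling tree is detached and grafted onto the rightmost leaf of this left sibling, or a move
happens inside one of the trees. -/
inductive ForestMove : List (STerm S ar) → List (STerm S ar) → Prop
  | root (pre : List (STerm S ar)) (t t' : STerm S ar) (post : List (STerm S ar)) :
      t' ≠ STerm.leaf → ForestMove (pre ++ t :: t' :: post) (pre ++ t.graftRight t' :: post)
  | tree (pre : List (STerm S ar)) (t t' : STerm S ar) (post : List (STerm S ar)) :
      STerm.TermMove t t' → ForestMove (pre ++ t :: post) (pre ++ t' :: post)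

/-- The relation `≼`: reflexive and transitive closure of the easterly wind move. -/
def EWLe (f f' : List (STerm S ar)) : Prop := Relation.ReflTransGen ForestMove f f'

/-- Decoration word of a forest. -/
def forestDecs (f : List (STerm S ar)) : List S := (f.map STerm.decs).flatten

/-- Degree (number of internal nodes) of a forest. -/
def forestDeg (f : List (STerm S ar)) : ℕ := (f.map STerm.degree).sum

/-- Preorder indices (from 0) of the roots of the trees of a forest. -/
def rootIdxs : List (STerm S ar) → List ℕ
  | [] => []
  | t :: r => 0 :: (rootIdxs r).map (· + t.degree)

/-- Edges between internal nodes of a forest, numbered in preorder from 0. -/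
def forestEdges : List (STerm S ar) → List (ℕ × ℕ × ℕ)
  | [] => []
  | t :: r => t.edges ++ (forestEdges r).map fun e => (e.1 + t.degree, e.2.1, e.2.2 + t.degree)

/-- Grafting the terms of `l` onto the successive extremal leaves of `t`. -/
def underSub (t : STerm S ar) (l : List (STerm S ar)) : STerm S ar :=
  t.graftList (List.ofFn (n := t.arity) fun p =>
    if (p : ℕ) < t.arity - t.extremalCount then STerm.leaf
    else l.getD ((p : ℕ) - (t.arity - t.extremalCount)) STerm.leaf)

/-- The under product `f' △ f''` of two forests. -/
def underP (f' f'' : List (STerm S ar)) : List (STerm S ar) :=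
  match f'.getLast? with
  | none => f''
  | some t => f'.dropLast ++ underSub t (f''.take t.extremalCount) :: f''.drop t.extremalCount

/-- The term `ι g` of degree 1 whose root is decorated by `g`. -/
def iotaT (g : S) : STerm S ar := STerm.node g fun _ => STerm.leaf

/-- The minimal forest of the interval `W(w)`. -/
def fmin (w : List S) : List (STerm S ar) := w.map iotaT

/-- The maximal forest of the interval `W(w)`: `ι g₁ ∘₁ ι g₂ ∘₁ ⋯ ∘₁ ι g_ℓ`. -/
def fmax : List S → List (STerm S ar)
  | [] => []
  | g :: gs => [(gs.map iotaT).foldl STerm.graftFirst (iotaT g)]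

end Forest
section Alphabet

variable {S : Type} {ar : S → ℕ}

/-- An `S`-forest-like alphabet: a type endowed with a root relation, decoration relations,
and edge relations. -/
structure ForestAlphabet (S : Type) (A : Type) where
  Root : A → Prop
  Dec : S → A → Prop
  Edge : ℕ → A → A → Prop

/-- `f`-compatibility `w ⊩^A f` of a word `w` over a forest-like alphabet. -/
def ForestAlphabet.Compat {A : Type} (Al : ForestAlphabet S A) (w : List A)
    (f : List (STerm S ar)) : Prop :=
  w.length = forestDeg f ∧
  (∀ (i : ℕ) (hi : i < w.length), i ∈ rootIdxs f → Al.Root (w.get ⟨i, hi⟩)) ∧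
  (∀ (i : ℕ) (hi : i < w.length) (hd : i < (forestDecs f).length),
      Al.Dec ((forestDecs f).get ⟨i, hd⟩) (w.get ⟨i, hi⟩)) ∧
  (∀ p j q, (p, j, q) ∈ forestEdges f → ∀ (hp : p < w.length) (hq : q < w.length),
      Al.Edge j (w.get ⟨p, hp⟩) (w.get ⟨q, hq⟩))

/-- The disjoint sum of two forest-like alphabets. -/
def ForestAlphabet.dsum {A B : Type} (Al : ForestAlphabet S A) (Bl : ForestAlphabet S B) :
    ForestAlphabet S (A ⊕ B) where
  Root := Sum.elim Al.Root Bl.Root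
  Dec g := Sum.elim (Al.Dec g) (Bl.Dec g)
  Edge j x y :=
    match x, y with
    | Sum.inl a, Sum.inl a' => Al.Edge j a a'
    | Sum.inr b, Sum.inr b' => Bl.Edge j b b'
    | Sum.inl _, Sum.inr b => Bl.Root b
    | Sum.inr _, Sum.inl _ => False

/-- The alphabet `𝔸_S` with letters `a_{g,u}`, `g ∈ S`, `u ∈ ℕ*`. -/
def ASAlphabet (S : Type) : ForestAlphabet S (S × List ℕ) where
  Root a := ∃ ℓ, a.2 = List.replicate ℓ 0
  Dec g a := a.1 = g
  Edge j a a' := ∃ ℓ, a'.2 = a.2 ++ j :: List.replicate ℓ 0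

/-- The alphabet `A_ℕ` with letters `a_i`, `i ∈ ℕ`, where every letter is a root, every letter
has every decoration, and `a_i →_j a_{i'}` iff `i < i'`. -/
def ANAlphabet (S : Type) : ForestAlphabet S ℕ where
  Root _ := True
  Dec _ _ := True
  Edge _ i i' := i < i'

/-- The packing of a word of natural numbers. -/
def pck (w : List ℕ) : List ℕ :=
  w.map fun m => ((w.filter (· ≤ m)).dedup).length

end Alphabet
section Algebra

open scoped TensorProduct

variable {S : Type} {ar : S → ℕ}

/-- Reduced `S`-terms. -/
abbrev RTerm (S : Type) (ar : S → ℕ) := {t : STerm S ar // t ≠ STerm.leaf}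

/-- The map `rd` keeping the non-leaf entries of a sequence of terms. -/
def rdF : List (STerm S ar) → List (RTerm S ar)
  | [] => []
  | STerm.leaf :: r => rdF r
  | STerm.node g c :: r => ⟨STerm.node g c, fun h => nomatch h⟩ :: rdF r

/-- The natural Hopf algebra `N(S)` as a module: the monoid algebra of the free monoid on the
set of reduced `S`-terms. -/
abbrev NAlg (𝕂 : Type) [CommSemiring 𝕂] (S : Type) (ar : S → ℕ) :=
  MonoidAlgebra 𝕂 (FreeMonoid (RTerm S ar))

/-- The basis element `E_f` of `N(S)` indexed by a reduced forest `f`. -/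
noncomputable def EBasis (𝕂 : Type) [CommSemiring 𝕂] {S : Type} {ar : S → ℕ}
    (f : List (RTerm S ar)) : NAlg 𝕂 S ar :=
  MonoidAlgebra.of 𝕂 (FreeMonoid (RTerm S ar)) (FreeMonoid.ofList f)

/-- The coproduct `Δ` of `N(S)`, defined linearly on the basis by
`Δ E_f = Σ E_{rd(s₁…s_k)} ⊗ E_{rd(u₁…u_k)}`, the sum ranging over all factorizations
`t_m = s_m⟨ū_m⟩` of the entries of `f`. -/
noncomputable def DeltaN (𝕂 : Type) [CommSemiring 𝕂] (S : Type) (ar : S → ℕ) :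
    NAlg 𝕂 S ar →ₗ[𝕂] (NAlg 𝕂 S ar) ⊗[𝕂] (NAlg 𝕂 S ar) :=
  (Finsupp.lift ((NAlg 𝕂 S ar) ⊗[𝕂] (NAlg 𝕂 S ar)) 𝕂 (FreeMonoid (RTerm S ar)) fun m =>
    ∑ᶠ c ∈ {c : List (STerm S ar × List (STerm S ar)) |
        List.Forall₂ (fun p t => p.2.length = p.1.arity ∧ p.1.graftList p.2 = t.val) c
          (FreeMonoid.toList m)},
      (EBasis 𝕂 (rdF (c.map Prod.fst))) ⊗ₜ[𝕂] (EBasis 𝕂 (rdF (c.flatMap Prod.snd)))) ∘ₗ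
    (MonoidAlgebra.coeffLinearEquiv 𝕂).toLinearMap

end Algebra

/-!
A forest is coded by its preorder word, in which a letter `none` stands for a leaf, up to trailing
letters `none`. In this code, an easterly wind move lets a letter `none` jump to the right over the
word of a reduced term; jumping over everything that follows, any `none` can also be erased.
If `f'` has `k` nodes and `A` is its word up to its last node, then the words of `f' ▽ f''`,
of `f' △ f''` and of every forest between them start with `A`, and what follows `A` codes `f''` up
to letters `none`. More precisely, cutting a word right after its `k`-th node is monotone in both
parts, and the interval from `f' ▽ f''` to `f' △ f''` is exactly the fibre of the cut over
`(f', f'')`. Grouping the terms of `E_{f'} E_{f''} = E_{f' f''}` by these fibres gives, in the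
product order on pairs of forests, the same sums over upper sets for `(f', f'') ↦ F_{f'} F_{f''}`
and for the sum of `F` over the interval, so both families coincide by Möbius inversion.
-/

namespace EasterlyWind

theorem ofFn_getD_append_drop {α : Type*} {n : ℕ} {Q : List α} (h : n ≤ Q.length) (d : α) :
    List.ofFn (fun i : Fin n => Q.getD i d) ++ Q.drop n = Q := by
  conv_rhs => rw [← List.take_append_drop n Q]
  congr 1
  refine List.ext_getElem (by simpa using h) fun i h₁ h₂ => ?_
  simp [List.getD_eq_getElem?_getD, List.getElem?_eq_getElem (by grind : i < Q.length)]

theorem getD_set_eq_update {α : Type*} {n : ℕ} {Q : List α} (j : Fin n) (hj : j < Q.length)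
    (a d : α) : (fun i : Fin n => (Q.set j a).getD i d) =
      Function.update (fun i : Fin n => Q.getD i d) j a := by
  funext i
  simp only [List.getD_eq_getElem?_getD, List.getElem?_set, Function.update_apply, Fin.ext_iff]
  grind

theorem ofFn_update {n : ℕ} {α : Type*} (c : Fin n → α) (i : Fin n) (a : α) :
    List.ofFn (Function.update c i a) = (List.ofFn c).set i a := by
  refine List.ext_getElem (by simp) fun j h₁ h₂ => ?_
  simp only [List.getElem_ofFn, List.getElem_set, Function.update_apply, Fin.ext_iff]
  grind

theorem exists_ofFn_eq_append_cons {n : ℕ} {α : Type*} (c : Fin n → α) (i : Fin n) :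
    ∃ pre post : List α, pre.length = (i : ℕ) ∧ List.ofFn c = pre ++ c i :: post := by
  refine ⟨(List.ofFn c).take i, (List.ofFn c).drop (i + 1), by simp [i.2.le], ?_⟩
  conv_lhs => rw [← List.take_append_drop i (List.ofFn c), List.drop_eq_getElem_cons (by simp)]
  simp

theorem finite_setOf_subperm {α : Type*} (w : List α) : {u : List α | u.Subperm w}.Finite := by
  refine (w.sublists.flatMap List.permutations).finite_toSet.subset fun u hu => ?_
  obtain ⟨v, hv, hsub⟩ := hu
  simp only [List.mem_flatMap, List.mem_sublists, List.mem_permutations, Set.mem_ofPred_eq]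
  exact ⟨v, hsub, hv.symm⟩

theorem eq_of_forall_sum_Ici_eq {α M : Type*} [PartialOrder α] [LocallyFiniteOrderTop α]
    [AddCommMonoid M] [IsCancelAdd M] {u v : α → M}
    (h : ∀ x, ∑ y ∈ Finset.Ici x, u y = ∑ y ∈ Finset.Ici x, v y) : u = v := by
  funext x
  induction hn : (Finset.Ici x).card using Nat.strong_induction_on generalizing x with
  | _ n ih =>
    subst hn
    have hlt : ∑ y ∈ Finset.Ioi x, u y = ∑ y ∈ Finset.Ioi x, v y :=
      Finset.sum_congr rfl fun y hy => ih _
        (Finset.card_lt_card (Finset.Ici_ssubset_Ici.2 (Finset.mem_Ioi.1 hy))) y rfl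
    have hx := h x
    rw [← Finset.add_sum_Ioi_eq_sum_Ici, ← Finset.add_sum_Ioi_eq_sum_Ici, hlt] at hx
    exact add_right_cancel hx

open STerm

variable {S : Type} {ar : S → ℕ}

/-! ### Preorder words -/

/-- The preorder word of a list of terms. -/
def word (L : List (STerm S ar)) : List (Option S) := L.flatMap STerm.preo

@[simp]
theorem word_nil : word ([] : List (STerm S ar)) = [] := rfl

@[simp]
theorem word_cons (t : STerm S ar) (L : List (STerm S ar)) :
    word (t :: L) = t.preo ++ word L := rfl

@[simp]
theorem word_append (L M : List (STerm S ar)) : word (L ++ M) = word L ++ word M :=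
  List.flatMap_append

@[simp]
theorem preo_leaf : (leaf : STerm S ar).preo = [none] := by
  simp only [preo]

@[simp]
theorem preo_node (g : S) (c : Fin (ar g) → STerm S ar) :
    (node g c).preo = some g :: word (List.ofFn c) := by
  simp [preo, word, List.flatMap_def, List.map_ofFn, Function.comp_def]

@[simp]
theorem word_replicate_leaf (n : ℕ) :
    word (List.replicate n (leaf : STerm S ar)) = List.replicate n none := by
  simp [word, List.flatMap_replicate]

/-- The list obtained from `Q` by gathering its first `ar g` entries under a node decorated by `g`,
missing entries being read as leaves. -/
def gather (g : S) (Q : List (STerm S ar)) : List (STerm S ar) :=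
  node g (fun i => Q.getD i leaf) :: Q.drop (ar g)

theorem gather_ofFn_append (g : S) (c : Fin (ar g) → STerm S ar) (L : List (STerm S ar)) :
    gather g (List.ofFn c ++ L) = node g c :: L := by
  simp [gather, List.getD_eq_getElem?_getD, List.getElem?_append]

theorem gather_append {g : S} {Q : List (STerm S ar)} (h : ar g ≤ Q.length)
    (L : List (STerm S ar)) : gather g (Q ++ L) = gather g Q ++ L := by
  simp only [gather, List.cons_append, List.drop_append_of_le_length h]
  congr 2
  funext i
  exact List.getD_append _ _ _ _ (i.2.trans_le h)

theorem gather_append_replicate_leaf (g : S) (Q : List (STerm S ar)) (n : ℕ) :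
    gather g (Q ++ List.replicate n leaf) =
      gather g Q ++ List.replicate (n - (ar g - Q.length)) leaf := by
  simp only [gather, List.cons_append, List.drop_append, List.drop_replicate]
  congr 2
  funext i
  simp only [List.getD_eq_getElem?_getD, List.getElem?_append, List.getElem?_replicate]
  grind

theorem word_gather {g : S} {Q : List (STerm S ar)} (h : ar g ≤ Q.length) :
    word (gather g Q) = some g :: word Q := by
  conv_rhs => rw [← ofFn_getD_append_drop h leaf]
  simp [gather]

/-- The list of terms read from an arbitrary word. A word which is too short is completed by as many
letters `none` as needed, so every word is the preorder word of a list up to trailing letters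
`none`. -/
def parse : List (Option S) → List (STerm S ar)
  | [] => []
  | none :: w => leaf :: parse w
  | some g :: w => gather g (parse w)

theorem parse_word_append_of_forall {L : List (STerm S ar)}
    (h : ∀ t ∈ L, ∀ w, parse (t.preo ++ w) = t :: parse (ar := ar) w) (w : List (Option S)) :
    parse (word L ++ w) = L ++ parse w := by
  induction L with
  | nil => rfl
  | cons t L ih =>
    rw [word_cons, List.append_assoc, h t List.mem_cons_self,
      ih fun s hs => h s (List.mem_cons_of_mem t hs), List.cons_append]

theorem parse_preo_append (t : STerm S ar) (w : List (Option S)) :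
    parse (t.preo ++ w) = t :: parse (ar := ar) w := by
  induction t generalizing w with
  | leaf => simp [parse]
  | node g c ih =>
    rw [preo_node, List.cons_append, parse, parse_word_append_of_forall, gather_ofFn_append]
    exact fun t ht => (List.mem_ofFn.1 ht).elim fun i hi => hi ▸ ih i

theorem parse_word_append (L : List (STerm S ar)) (w : List (Option S)) :
    parse (word L ++ w) = L ++ parse w :=
  parse_word_append_of_forall (fun t _ => parse_preo_append t) w

@[simp]
theorem parse_word (L : List (STerm S ar)) : parse (word L) = L := by
  simpa [parse] using parse_word_append L []

theorem word_injective : Function.Injective (word : List (STerm S ar) → List (Option S)) :=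
  Function.LeftInverse.injective parse_word

theorem parse_append_replicate_none (w : List (Option S)) (n : ℕ) :
    ∃ m, parse (ar := ar) (w ++ List.replicate n none) = parse w ++ List.replicate m leaf := by
  induction w with
  | nil => exact ⟨n, by simpa [parse] using parse_word (List.replicate n (leaf : STerm S ar))⟩
  | cons o w ih =>
    obtain ⟨m, hm⟩ := ih
    cases o with
    | none => exact ⟨m, by simp [parse, hm]⟩
    | some g => exact ⟨_, by rw [List.cons_append, parse, hm, gather_append_replicate_leaf, parse]⟩

theorem exists_word_parse_eq (w : List (Option S)) :
    ∃ n, word (parse (ar := ar) w) = w ++ List.replicate n none := by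
  induction w with
  | nil => exact ⟨0, rfl⟩
  | cons o w ih =>
    obtain ⟨n, hn⟩ := ih
    cases o with
    | none => exact ⟨n, by simp [parse, hn]⟩
    | some g =>
      set Q := parse (ar := ar) w with hQ
      have hpad := gather_append_replicate_leaf g Q (ar g - Q.length)
      rw [Nat.sub_self, List.replicate_zero, List.append_nil] at hpad
      refine ⟨n + (ar g - Q.length), ?_⟩
      rw [parse, ← hQ, ← hpad, word_gather (by grind), word_append, hn,
        word_replicate_leaf, List.cons_append, List.append_assoc, List.replicate_append_replicate]

theorem word_parse_of_append_eq {L : List (STerm S ar)} {u v : List (Option S)}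
    (h : word L = u ++ v) : word (parse (ar := ar) v) = v := by
  induction u generalizing L with
  | nil => rw [← List.nil_append v, ← h, parse_word]
  | cons o u ih =>
    match L with
    | [] => simp at h
    | leaf :: M =>
      rw [word_cons, preo_leaf] at h
      exact ih (L := M) (List.cons.inj h).2
    | node g c :: M =>
      rw [word_cons, preo_node, List.cons_append, ← word_append] at h
      exact ih (List.cons.inj h).2

theorem leaf_notMem_parse_of_append {u v : List (Option S)}
    (h : leaf ∉ parse (ar := ar) (u ++ v)) : leaf ∉ parse (ar := ar) u := by
  suffices H : ∀ n, leaf ∉ (parse (ar := ar) (u ++ v)).drop n →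
      leaf ∉ (parse (ar := ar) u).drop n from H 0 h
  clear h
  induction u with
  | nil => simp [parse]
  | cons o u ih =>
    intro n
    cases o with
    | none =>
      cases n with
      | zero => simp [parse]
      | succ n => simpa [parse] using ih n
    | some g =>
      cases n with
      | zero => simpa [parse, gather] using ih (ar g)
      | succ n => simpa [parse, gather] using ih (ar g + n)

/-! ### Moves on lists of terms which may contain leaves -/

/-- The easterly wind order on forests of reduced terms. -/
def ForestLE (f f' : List (RTerm S ar)) : Prop :=
  EWLe (f.map Subtype.val) (f'.map Subtype.val)

local infix:50 " ≼ " => ForestLE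

theorem ForestLE.refl (f : List (RTerm S ar)) : f ≼ f := Relation.ReflTransGen.refl

theorem ForestLE.trans {f₁ f₂ f₃ : List (RTerm S ar)} (h : f₁ ≼ f₂) (h' : f₂ ≼ f₃) : f₁ ≼ f₃ :=
  Relation.ReflTransGen.trans h h'

theorem rdF_cons_of_ne {t : STerm S ar} (ht : t ≠ leaf) (L : List (STerm S ar)) :
    rdF (t :: L) = ⟨t, ht⟩ :: rdF L := by
  cases t with
  | leaf => exact absurd rfl ht
  | node g c => rfl

theorem rdF_append (L M : List (STerm S ar)) : rdF (L ++ M) = rdF L ++ rdF M := by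
  fun_induction rdF L <;> simp_all [rdF]

@[simp]
theorem rdF_replicate_leaf (n : ℕ) : rdF (List.replicate n (leaf : STerm S ar)) = [] := by
  induction n <;> simp_all [List.replicate_succ, rdF]

@[simp]
theorem rdF_map_val (f : List (RTerm S ar)) : rdF (f.map Subtype.val) = f := by
  induction f with
  | nil => rfl
  | cons t f ih => rw [List.map_cons, rdF_cons_of_ne t.2, ih]

theorem map_val_rdF {L : List (STerm S ar)} (h : leaf ∉ L) : (rdF L).map Subtype.val = L := by
  fun_induction rdF L <;> simp_all

theorem leaf_notMem_map_val (f : List (RTerm S ar)) : leaf ∉ f.map Subtype.val := by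
  simp

theorem ForestLE.append {f₁ f₂ g₁ g₂ : List (RTerm S ar)} (hf : f₁ ≼ f₂) (hg : g₁ ≼ g₂) :
    f₁ ++ g₁ ≼ f₂ ++ g₂ := by
  have left (p : List (STerm S ar)) {f f' : List (STerm S ar)} (h : ForestMove f f') :
      ForestMove (p ++ f) (p ++ f') := by
    cases h with
    | root pre t t' post hne => simpa using ForestMove.root (p ++ pre) t t' post hne
    | tree pre t t' post hm => simpa using ForestMove.tree (p ++ pre) t t' post hm
  have right (p : List (STerm S ar)) {f f' : List (STerm S ar)} (h : ForestMove f f') :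
      ForestMove (f ++ p) (f' ++ p) := by
    cases h with
    | root pre t t' post hne => simpa using ForestMove.root pre t t' (post ++ p) hne
    | tree pre t t' post hm => simpa using ForestMove.tree pre t t' (post ++ p) hm
  unfold ForestLE
  simp only [List.map_append]
  exact (Relation.ReflTransGen.lift (· ++ _) (fun _ _ => right _) _ _ hf).trans
    (Relation.ReflTransGen.lift (_ ++ ·) (fun _ _ => left _) _ _ hg)

/-- The easterly wind move on lists of terms which may contain leaves: when a root is grafted onto
its left sibling, a leaf is left in its place. -/
inductive LeafyMove : List (STerm S ar) → List (STerm S ar) → Prop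
  | sibling (pre : List (STerm S ar)) (y x : STerm S ar) (post : List (STerm S ar))
      (hx : x ≠ leaf) : LeafyMove (pre ++ y :: x :: post) (pre ++ y.graftRight x :: leaf :: post)
  | inside (pre : List (STerm S ar)) (t t' : STerm S ar) (post : List (STerm S ar))
      (h : TermMove t t') : LeafyMove (pre ++ t :: post) (pre ++ t' :: post)

theorem LeafyMove.append_left (p : List (STerm S ar)) {L L' : List (STerm S ar)}
    (h : LeafyMove L L') : LeafyMove (p ++ L) (p ++ L') := by
  cases h with
  | sibling pre y x post hx => simpa using sibling (p ++ pre) y x post hx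
  | inside pre t t' post h => simpa using inside (p ++ pre) t t' post h

theorem gather_set {g : S} {Q : List (STerm S ar)} (j : Fin (ar g)) (hj : j < Q.length)
    (a : STerm S ar) : gather g (Q.set j a) =
      node g (Function.update (fun i => Q.getD i leaf) j a) :: Q.drop (ar g) := by
  rw [gather, getD_set_eq_update j hj a leaf, List.drop_set_of_lt j.2]

theorem LeafyMove.gather_sibling {g : S} {Q : List (STerm S ar)} {j : ℕ} (hQ : j + 1 < Q.length)
    (hj : j + 1 < ar g) (hx : Q.getD (j + 1) leaf ≠ leaf) :
    LeafyMove (gather g Q) (gather g ((Q.set j ((Q.getD j leaf).graftRight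
      (Q.getD (j + 1) leaf))).set (j + 1) leaf)) := by
  have hm := inside [] _ _ (Q.drop (ar g)) (TermMove.here g (fun i => Q.getD i leaf)
    ⟨j, by omega⟩ ⟨j + 1, hj⟩ rfl hx)
  have key := gather_set (g := g) (Q := Q.set j ((Q.getD j leaf).graftRight
    (Q.getD (j + 1) leaf))) ⟨j + 1, hj⟩ (by simpa using hQ) leaf
  rw [getD_set_eq_update ⟨j, by omega⟩ (by simp; omega) _ leaf,
    List.drop_set_of_lt (by omega)] at key
  rwa [key]

theorem exists_gather_graftRight {g : S} {pre : List (STerm S ar)} (h : pre.length + 1 = ar g)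
    (y x : STerm S ar) : ∃ t, gather g (pre ++ [y]) = [t] ∧
      gather g (pre ++ [y.graftRight x]) = [t.graftRight x] := by
  refine ⟨node g fun i => (pre ++ [y]).getD i leaf, by simp [gather, ← h], ?_⟩
  have key := gather_set (g := g) (Q := pre ++ [y]) ⟨pre.length, by omega⟩ (by simp)
    (y.graftRight x)
  have hlast (i : Fin (ar g)) (hi : (i : ℕ) = ar g - 1) : (pre ++ [y]).getD i leaf = y := by
    simp [hi, ← h]
  rw [List.drop_eq_nil_of_le (by simp [h])] at key
  simp only [List.set_append_right, le_refl, Nat.sub_self, List.set_cons_zero] at key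
  rw [key, graftRight]
  congr 2
  funext i
  simp only [Function.update_apply, Fin.ext_iff]
  grind

theorem LeafyMove.gather {g : S} {Q Q' : List (STerm S ar)} (h : LeafyMove Q Q') :
    LeafyMove (gather g Q) (gather g Q') := by
  cases h with
  | sibling pre y x post hx =>
    rcases lt_trichotomy (pre.length + 1) (ar g) with hlt | heq | hgt
    · simpa using gather_sibling (Q := pre ++ y :: x :: post) (by simp) hlt (by simpa using hx)
    · obtain ⟨t, ht, htx⟩ := exists_gather_graftRight heq y x
      have hsplit (z w : STerm S ar) : EasterlyWind.gather g (pre ++ z :: w :: post) =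
          EasterlyWind.gather g (pre ++ [z]) ++ w :: post := by
        rw [← gather_append (by simp [heq]), List.append_assoc, List.singleton_append]
      rw [hsplit, hsplit, ht, htx]
      exact sibling [] t x post hx
    · have hpre : ar g ≤ pre.length := by omega
      rw [gather_append hpre, gather_append hpre]
      exact (sibling [] y x post hx).append_left _
  | inside pre t t' post h =>
    rcases lt_or_ge pre.length (ar g) with hlt | hge
    · have key := gather_set (g := g) (Q := pre ++ t :: post) ⟨pre.length, hlt⟩ (by simp) t'
      simp only [List.set_append_right, le_refl, Nat.sub_self, List.set_cons_zero] at key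
      rw [key]
      refine inside [] _ _ _ (TermMove.child g _ ⟨pre.length, hlt⟩ t' ?_)
      simpa using h
    · rw [gather_append hge, gather_append hge]
      exact (inside [] t t' post h).append_left _

theorem termMove_ne_leaf {t t' : STerm S ar} (h : TermMove t t') : t ≠ leaf ∧ t' ≠ leaf := by
  cases h <;> simp

theorem graftRight_ne_leaf {y : STerm S ar} (hy : y ≠ leaf) (x : STerm S ar) :
    y.graftRight x ≠ leaf := by
  cases y with
  | leaf => exact absurd rfl hy
  | node g c => simp [graftRight]

theorem LeafyMove.forestLE {L L' : List (STerm S ar)} (h : LeafyMove L L') : rdF L ≼ rdF L' := by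
  cases h with
  | sibling pre y x post hx =>
    by_cases hy : y = leaf
    · subst hy
      have heq : rdF (pre ++ leaf :: x :: post) =
          rdF (pre ++ (leaf : STerm S ar).graftRight x :: leaf :: post) := by
        simp only [rdF_append, rdF, graftRight, rdF_cons_of_ne hx]
      exact heq ▸ ForestLE.refl _
    · refine Relation.ReflTransGen.single ?_
      simpa [rdF_append, rdF_cons_of_ne, hx, hy, graftRight_ne_leaf, rdF] using
        ForestMove.root ((rdF pre).map Subtype.val) y x ((rdF post).map Subtype.val) hx
  | inside pre t t' post h =>
    obtain ⟨ht, ht'⟩ := termMove_ne_leaf h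
    refine Relation.ReflTransGen.single ?_
    simpa [rdF_append, rdF_cons_of_ne, ht, ht'] using
      ForestMove.tree ((rdF pre).map Subtype.val) t t' ((rdF post).map Subtype.val) h

/-! ### Moves on words -/

/-- The reduced forest read from an arbitrary word. -/
def toForest (w : List (Option S)) : List (RTerm S ar) := rdF (parse w)

/-- The preorder word of a forest of reduced terms. -/
def forestWord (f : List (RTerm S ar)) : List (Option S) := word (f.map Subtype.val)

theorem word_map_val (f : List (RTerm S ar)) : word (f.map Subtype.val) = forestWord f := rfl

theorem forestWord_append (f g : List (RTerm S ar)) :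
    forestWord (f ++ g) = forestWord f ++ forestWord g := by
  simp [forestWord]

theorem toForest_word_append (L : List (STerm S ar)) (w : List (Option S)) :
    toForest (word L ++ w) = rdF L ++ toForest w := by
  rw [toForest, parse_word_append, rdF_append, toForest]

theorem toForest_forestWord_append (f : List (RTerm S ar)) (w : List (Option S)) :
    toForest (forestWord f ++ w) = f ++ toForest w := by
  rw [forestWord, toForest_word_append, rdF_map_val]

@[simp]
theorem toForest_forestWord (f : List (RTerm S ar)) : toForest (forestWord f) = f := by
  rw [toForest, forestWord, parse_word, rdF_map_val]

theorem toForest_replicate_none_append (n : ℕ) (w : List (Option S)) :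
    toForest (ar := ar) (List.replicate n none ++ w) = toForest w := by
  simpa using toForest_word_append (List.replicate n (leaf : STerm S ar)) w

theorem toForest_append_replicate_none (w : List (Option S)) (n : ℕ) :
    toForest (ar := ar) (w ++ List.replicate n none) = toForest w := by
  obtain ⟨m, hm⟩ := parse_append_replicate_none (ar := ar) w n
  rw [toForest, hm, rdF_append, rdF_replicate_leaf, List.append_nil, toForest]

/-- The easterly wind move on words: a letter `none` jumps over the word of a reduced term which
follows it. As words are considered up to trailing letters `none`, these may be added or removed. -/
inductive WordMove (ar : S → ℕ) : List (Option S) → List (Option S) → Prop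
  | jump (p : List (Option S)) (x : STerm S ar) (r : List (Option S)) (hx : x ≠ leaf) :
      WordMove ar (p ++ none :: (x.preo ++ r)) (p ++ (x.preo ++ none :: r))
  | pad (w : List (Option S)) : WordMove ar w (w ++ [none])
  | trim (w : List (Option S)) : WordMove ar (w ++ [none]) w

/-- The reflexive and transitive closure of the moves on words. -/
def WordLE (ar : S → ℕ) : List (Option S) → List (Option S) → Prop :=
  Relation.ReflTransGen (WordMove ar)

theorem WordLE.refl (w : List (Option S)) : WordLE ar w w := Relation.ReflTransGen.refl

theorem WordMove.wordLE {w w' : List (Option S)} (h : WordMove ar w w') : WordLE ar w w' :=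
  Relation.ReflTransGen.single h

theorem WordLE.trans {w₁ w₂ w₃ : List (Option S)} (h : WordLE ar w₁ w₂) (h' : WordLE ar w₂ w₃) :
    WordLE ar w₁ w₃ :=
  Relation.ReflTransGen.trans h h'

theorem WordLE.append_left (p : List (Option S)) {w w' : List (Option S)} (h : WordLE ar w w') :
    WordLE ar (p ++ w) (p ++ w') := by
  refine Relation.ReflTransGen.lift (p ++ ·) (fun w w' hm => ?_) _ _ h
  cases hm with
  | jump q x r hx => simpa using WordMove.jump (p ++ q) x r hx
  | pad => simpa [Function.onFun] using WordMove.pad (ar := ar) (p ++ w)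
  | trim => simpa [Function.onFun] using WordMove.trim (ar := ar) (p ++ w')

theorem wordLE_pad (w : List (Option S)) (n : ℕ) :
    WordLE ar w (w ++ List.replicate n none) := by
  induction n with
  | zero => simpa using WordLE.refl w
  | succ n ih => simpa [List.replicate_succ'] using ih.trans (WordMove.pad _).wordLE

theorem wordLE_trim (w : List (Option S)) (n : ℕ) :
    WordLE ar (w ++ List.replicate n none) w := by
  induction n with
  | zero => simpa using WordLE.refl w
  | succ n ih => simpa [List.replicate_succ'] using (WordMove.trim _).wordLE.trans ih

theorem wordLE_jump_word (L : List (STerm S ar)) (r : List (Option S)) :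
    WordLE ar (none :: (word L ++ r)) (word L ++ none :: r) := by
  induction L with
  | nil => exact WordLE.refl _
  | cons t L ih =>
    have hrest : WordLE ar (t.preo ++ none :: (word L ++ r)) (t.preo ++ (word L ++ none :: r)) :=
      ih.append_left t.preo
    by_cases ht : t = leaf
    · subst ht
      simpa using hrest
    · simpa using (WordMove.jump [] t (word L ++ r) ht).wordLE.trans hrest

theorem wordLE_replicate_none_jump (n : ℕ) (t : STerm S ar) (r : List (Option S)) :
    WordLE ar (List.replicate n none ++ (t.preo ++ r))
      (t.preo ++ (List.replicate n none ++ r)) := by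
  induction n with
  | zero => exact WordLE.refl _
  | succ n ih =>
    have hjump := wordLE_jump_word [t] (List.replicate n none ++ r)
    simp only [word_cons, word_nil, List.append_nil] at hjump
    simpa [List.replicate_succ] using (ih.append_left [none]).trans hjump

/-- Once the word is padded so as to be the word of a list of terms, the letter `none` jumps over
all of these terms and is then trimmed. -/
theorem wordLE_erase_none (p w : List (Option S)) : WordLE ar (p ++ none :: w) (p ++ w) := by
  suffices h : WordLE ar (none :: w) w from h.append_left p
  obtain ⟨n, hn⟩ := exists_word_parse_eq (ar := ar) w
  have hjump := wordLE_jump_word (parse (ar := ar) w) []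
  rw [hn, List.append_nil, List.append_assoc] at hjump
  have hpad := wordLE_pad (ar := ar) (none :: w) n
  have htrim := wordLE_trim (ar := ar) w (n + 1)
  rw [List.replicate_succ'] at htrim
  exact (hpad.trans hjump).trans htrim

theorem wordLE_forestWord_rdF (L : List (STerm S ar)) :
    WordLE ar (word L) (forestWord (rdF L)) := by
  induction L with
  | nil => exact WordLE.refl _
  | cons t L ih =>
    by_cases ht : t = leaf
    · subst ht
      exact (wordLE_erase_none [] (word L)).trans ih
    · simpa [forestWord, rdF_cons_of_ne ht] using ih.append_left t.preo

theorem wordLE_replicate_none_append_forestWord {L : List (STerm S ar)} {n : ℕ}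
    (hn : L.length ≤ n) :
    WordLE ar (List.replicate n none ++ forestWord (rdF L)) (word L) := by
  induction L generalizing n with
  | nil => simpa [forestWord, rdF] using wordLE_trim (ar := ar) [] n
  | cons t L ih =>
    rw [List.length_cons] at hn
    by_cases ht : t = leaf
    · obtain ⟨m, rfl⟩ : ∃ m, n = m + 1 := ⟨n - 1, by omega⟩
      subst ht
      exact (ih (n := m) (by omega)).append_left [none]
    · have hword : forestWord (rdF (t :: L)) = t.preo ++ forestWord (rdF L) := by
        simp [forestWord, rdF_cons_of_ne ht]
      rw [hword, word_cons]
      exact (wordLE_replicate_none_jump n t _).trans ((ih (by omega)).append_left _)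

theorem LeafyMove.parse_append {w w' : List (Option S)}
    (h : LeafyMove (parse (ar := ar) w) (parse w')) (p : List (Option S)) :
    LeafyMove (parse (ar := ar) (p ++ w)) (parse (p ++ w')) := by
  induction p with
  | nil => exact h
  | cons o p ih =>
    cases o with
    | none => exact ih.append_left [leaf]
    | some g => exact ih.gather

theorem leafyMove_parse_jump (x : STerm S ar) (hx : x ≠ leaf) (p r : List (Option S)) :
    LeafyMove (parse (ar := ar) (p ++ none :: (x.preo ++ r)))
      (parse (p ++ (x.preo ++ none :: r))) := by
  refine LeafyMove.parse_append ?_ p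
  rw [parse, parse_preo_append, parse_preo_append, parse]
  simpa [graftRight] using LeafyMove.sibling [] leaf x (parse r) hx

theorem toForest_append_none (w : List (Option S)) :
    toForest (ar := ar) (w ++ [none]) = toForest w :=
  toForest_append_replicate_none w 1

theorem toForest_mono {w w' : List (Option S)} (h : WordLE ar w w') :
    toForest (ar := ar) w ≼ toForest w' := by
  induction h with
  | refl => exact ForestLE.refl _
  | tail _ hm ih =>
    refine ih.trans ?_
    cases hm with
    | jump p x r hx => exact (leafyMove_parse_jump x hx p r).forestLE
    | pad => exact (toForest_append_none (ar := ar) _).symm ▸ ForestLE.refl _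
    | trim => exact (toForest_append_none (ar := ar) _).symm ▸ ForestLE.refl _

/-! ### The easterly wind order -/

theorem exists_preo_graftRight (hpos : ∀ g : S, 0 < ar g) (t : STerm S ar) :
    ∃ p, t.preo = p ++ [none] ∧ ∀ x, (t.graftRight x).preo = p ++ x.preo := by
  induction t with
  | leaf => exact ⟨[], by simp, fun x => by simp [graftRight]⟩
  | node g c ih =>
    suffices h : ∃ p, word (List.ofFn c) = p ++ [none] ∧ ∀ x, word (List.ofFn fun i =>
        if (i : ℕ) = ar g - 1 then (c i).graftRight x else c i) = p ++ x.preo by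
      obtain ⟨p, hp, hgraft⟩ := h
      exact ⟨some g :: p, by simp [hp], fun x => by simp [graftRight, hgraft]⟩
    have hg := hpos g
    generalize ar g = n at c ih hg
    obtain ⟨m, rfl⟩ : ∃ m, n = m + 1 := ⟨n - 1, by omega⟩
    obtain ⟨p, hp, hgraft⟩ := ih (Fin.last m)
    refine ⟨word (List.ofFn fun i : Fin m => c i.castSucc) ++ p, ?_, fun x => ?_⟩
    · rw [List.ofFn_succ', List.concat_eq_append, word_append]
      simp [hp]
    · have hne (i : Fin m) : (i : ℕ) ≠ m := i.2.ne
      rw [List.ofFn_succ', List.concat_eq_append, word_append]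
      simp [hgraft, hne]

theorem exists_preo_of_termMove (hpos : ∀ g : S, 0 < ar g) {t t' : STerm S ar}
    (h : TermMove t t') : ∃ (p : List (Option S)) (x : STerm S ar) (r : List (Option S)),
      x ≠ leaf ∧ t.preo = p ++ none :: (x.preo ++ r) ∧ t'.preo = p ++ (x.preo ++ none :: r) := by
  induction h with
  | here g c j j' hj hne =>
    obtain ⟨p, hp, hgraft⟩ := exists_preo_graftRight hpos (c j)
    obtain ⟨pre, post, hpre, hc⟩ := exists_ofFn_eq_append_cons c j
    obtain ⟨post', rfl⟩ : ∃ post', post = c j' :: post' := by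
      have hget : (List.ofFn c)[(j' : ℕ)]? = some (c j') := by simp
      rw [hc, hj, ← hpre, List.getElem?_append_right (by omega)] at hget
      exact List.head?_eq_some_iff.1 (by simpa [List.head?_eq_getElem?] using hget)
    refine ⟨some g :: (word pre ++ p), c j', word post', hne, ?_, ?_⟩
    · simp [hc, hp]
    · simp [ofFn_update, hc, ← hpre, hj, hgraft]
  | child g c i t' _ ih =>
    obtain ⟨p, x, r, hx, hp, hr⟩ := ih
    obtain ⟨pre, post, hpre, hc⟩ := exists_ofFn_eq_append_cons c i
    refine ⟨some g :: (word pre ++ p), x, r ++ word post, hx, ?_, ?_⟩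
    · simp [hc, hp]
    · simp [ofFn_update, hc, ← hpre, hr]

theorem exists_word_of_forestMove (hpos : ∀ g : S, 0 < ar g) {L L' : List (STerm S ar)}
    (h : ForestMove L L') :
    ∃ (p : List (Option S)) (x : STerm S ar) (m : ℕ) (r : List (Option S)), x ≠ leaf ∧
      word L = p ++ none :: (x.preo ++ r) ∧
      word L' = p ++ (x.preo ++ (List.replicate m none ++ r)) ∧ m ≤ 1 := by
  cases h with
  | root pre t t' post hne =>
    obtain ⟨p, hp, hgraft⟩ := exists_preo_graftRight hpos t
    exact ⟨word pre ++ p, t', 0, word post, hne, by simp [hp], by simp [hgraft], by simp⟩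
  | tree pre t t' post ht =>
    obtain ⟨p, x, r, hx, hp, hr⟩ := exists_preo_of_termMove hpos ht
    exact ⟨word pre ++ p, x, 1, r ++ word post, hx, by simp [hp], by simp [hr], le_rfl⟩

theorem exists_preo_eq_some_cons {x : STerm S ar} (hx : x ≠ leaf) :
    ∃ (g : S) (w : List (Option S)), x.preo = some g :: w := by
  cases x with
  | leaf => exact absurd rfl hx
  | node g c => exact ⟨g, _, preo_node g c⟩

theorem word_subperm_of_ewLe (hpos : ∀ g : S, 0 < ar g) {L L' : List (STerm S ar)}
    (h : EWLe L L') : (word L').Subperm (word L) := by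
  induction h with
  | refl => exact List.Subperm.refl _
  | tail _ hm ih =>
    refine List.Subperm.trans ?_ ih
    obtain ⟨p, x, m, r, -, hL, hL', hm⟩ := exists_word_of_forestMove hpos hm
    rw [hL, hL']
    have herase : (List.replicate m none ++ r).Subperm (none :: r) :=
      List.Sublist.subperm (by interval_cases m <;> simp)
    exact (List.subperm_append_left p).2 <|
      ((List.subperm_append_left x.preo).2 herase).trans List.perm_middle.subperm

/-- The places of the leaves in a preorder word; the easterly wind moves decrease it
lexicographically. -/
def shape (w : List (Option S)) : List Bool := w.map Option.isNone

theorem shape_lt_of_forestMove (hpos : ∀ g : S, 0 < ar g) {L L' : List (STerm S ar)}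
    (h : ForestMove L L') : shape (word L') < shape (word L) := by
  obtain ⟨p, x, m, r, hx, hL, hL', -⟩ := exists_word_of_forestMove hpos h
  obtain ⟨g, w, hw⟩ := exists_preo_eq_some_cons hx
  simp only [hL, hL', hw, shape, List.map_append, List.map_cons, List.cons_append]
  refine List.append_left_lt (α := Bool) ?_
  simp [List.cons_lt_cons_iff]

theorem eq_or_shape_lt_of_ewLe (hpos : ∀ g : S, 0 < ar g) {L L' : List (STerm S ar)}
    (h : EWLe L L') : L = L' ∨ shape (word L') < shape (word L) := by
  induction h with
  | refl => exact Or.inl rfl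
  | tail _ hm ih =>
    have hlt := shape_lt_of_forestMove hpos hm
    exact Or.inr (ih.elim (fun h => h ▸ hlt) hlt.trans)

theorem ForestLE.antisymm (hpos : ∀ g : S, 0 < ar g) {f f' : List (RTerm S ar)} (h : f ≼ f')
    (h' : f' ≼ f) : f = f' := by
  refine List.map_injective_iff.2 Subtype.val_injective ?_
  by_contra hne
  exact lt_asymm ((eq_or_shape_lt_of_ewLe hpos h).resolve_left hne)
    ((eq_or_shape_lt_of_ewLe hpos h').resolve_left (Ne.symm hne))

theorem finite_setOf_forestLE (hpos : ∀ g : S, 0 < ar g) (f : List (RTerm S ar)) :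
    {f' | f ≼ f'}.Finite := by
  have hinj : Function.Injective (forestWord : List (RTerm S ar) → List (Option S)) :=
    word_injective.comp (List.map_injective_iff.2 Subtype.val_injective)
  exact ((finite_setOf_subperm (forestWord f)).preimage hinj.injOn).subset
    fun f' hf' => word_subperm_of_ewLe hpos hf'

/-! ### Cutting a word after a given number of nodes -/

/-- The number of nodes of a preorder word. -/
def nodeCount (w : List (Option S)) : ℕ := w.countP Option.isSome

@[simp]
theorem nodeCount_nil : nodeCount ([] : List (Option S)) = 0 := rfl

@[simp]
theorem nodeCount_none_cons (w : List (Option S)) : nodeCount (none :: w) = nodeCount w := by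
  simp [nodeCount]

@[simp]
theorem nodeCount_some_cons (g : S) (w : List (Option S)) :
    nodeCount (some g :: w) = nodeCount w + 1 := by
  simp [nodeCount]

@[simp]
theorem nodeCount_append (u v : List (Option S)) :
    nodeCount (u ++ v) = nodeCount u + nodeCount v :=
  List.countP_append

@[simp]
theorem nodeCount_replicate_none (n : ℕ) :
    nodeCount (List.replicate n (none : Option S)) = 0 := by
  simp [nodeCount]

theorem nodeCount_preo_pos {x : STerm S ar} (hx : x ≠ leaf) : 0 < nodeCount x.preo := by
  obtain ⟨g, w, hw⟩ := exists_preo_eq_some_cons hx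
  simp [hw]

/-- The prefix of a word which stops right after its `k`-th node. -/
def takeNodes : ℕ → List (Option S) → List (Option S)
  | 0, _ => []
  | _ + 1, [] => []
  | k + 1, none :: w => none :: takeNodes (k + 1) w
  | k + 1, some g :: w => some g :: takeNodes k w

/-- The suffix of a word which starts right after its `k`-th node. -/
def dropNodes : ℕ → List (Option S) → List (Option S)
  | 0, w => w
  | _ + 1, [] => []
  | k + 1, none :: w => dropNodes (k + 1) w
  | k + 1, some _ :: w => dropNodes k w

@[simp]
theorem takeNodes_zero (w : List (Option S)) : takeNodes 0 w = [] := by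
  simp [takeNodes]

@[simp]
theorem dropNodes_zero (w : List (Option S)) : dropNodes 0 w = w := by
  simp [dropNodes]

theorem takeNodes_append_dropNodes (k : ℕ) (w : List (Option S)) :
    takeNodes k w ++ dropNodes k w = w := by
  fun_induction takeNodes k w <;> simp_all [dropNodes]

theorem takeNodes_append (k : ℕ) (u v : List (Option S)) :
    takeNodes k (u ++ v) = takeNodes k u ++ takeNodes (k - nodeCount u) v := by
  fun_induction takeNodes k u <;> simp_all [takeNodes]

theorem dropNodes_append (k : ℕ) (u v : List (Option S)) :
    dropNodes k (u ++ v) = dropNodes k u ++ dropNodes (k - nodeCount u) v := by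
  fun_induction dropNodes k u <;> simp_all [dropNodes]

theorem dropNodes_eq_nil {k : ℕ} {w : List (Option S)} (h : nodeCount w < k) :
    dropNodes k w = [] := by
  fun_induction dropNodes k w <;> simp_all

theorem takeNodes_eq_self {k : ℕ} {w : List (Option S)} (h : nodeCount w < k) :
    takeNodes k w = w := by
  simpa [dropNodes_eq_nil h] using takeNodes_append_dropNodes k w

theorem takeNodes_takeNodes_append {k : ℕ} {w : List (Option S)} (h : k ≤ nodeCount w)
    (v : List (Option S)) : takeNodes k (takeNodes k w ++ v) = takeNodes k w := by
  fun_induction takeNodes k w <;> simp_all [takeNodes]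

theorem dropNodes_takeNodes_append {k : ℕ} {w : List (Option S)} (h : k ≤ nodeCount w)
    (v : List (Option S)) : dropNodes k (takeNodes k w ++ v) = v := by
  fun_induction takeNodes k w <;> simp_all [dropNodes]

theorem exists_dropNodes_nodeCount (w : List (Option S)) :
    ∃ n, dropNodes (nodeCount w) w = List.replicate n none := by
  induction w with
  | nil => exact ⟨0, rfl⟩
  | cons o w ih =>
    obtain ⟨n, hn⟩ := ih
    cases o with
    | none =>
      rw [nodeCount_none_cons]
      cases hk : nodeCount w with
      | zero => exact ⟨n + 1, by rw [hk, dropNodes_zero] at hn; simp [hn, List.replicate_succ]⟩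
      | succ k => exact ⟨n, by rw [← hn, hk, dropNodes]⟩
    | some g => exact ⟨n, by simpa [dropNodes] using hn⟩

theorem wordLE_jump_preo (p : List (Option S)) (x : STerm S ar) {m : ℕ} (hm : m ≤ 1)
    (r : List (Option S)) :
    WordLE ar (p ++ none :: (x.preo ++ r)) (p ++ (x.preo ++ (List.replicate m none ++ r))) := by
  interval_cases m
  · exact wordLE_erase_none p _
  · simpa using (wordLE_jump_word [x] r).append_left p

theorem wordLE_takeNodes (k : ℕ) (p : List (Option S)) (x : STerm S ar) {m : ℕ} (hm : m ≤ 1)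
    (r : List (Option S)) :
    WordLE ar (takeNodes k (p ++ none :: (x.preo ++ r)))
      (takeNodes k (p ++ (x.preo ++ (List.replicate m none ++ r)))) := by
  rw [takeNodes_append, takeNodes_append]
  cases k - nodeCount p with
  | zero => simpa using WordLE.refl _
  | succ j =>
    rw [takeNodes, takeNodes_append, takeNodes_append, takeNodes_append]
    rcases le_or_gt (j + 1) (nodeCount x.preo) with hle | hlt
    · simpa [Nat.sub_eq_zero_of_le hle] using wordLE_erase_none _ _
    · rw [takeNodes_eq_self hlt, takeNodes_eq_self (w := List.replicate m none) (by simp; omega)]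
      simpa using wordLE_jump_preo _ x hm _

theorem toForest_dropNodes_append (k : ℕ) (x : STerm S ar) (n : ℕ) (r : List (Option S)) :
    toForest (ar := ar) (dropNodes k x.preo ++ (List.replicate n none ++ r)) =
      toForest (dropNodes k x.preo ++ r) := by
  have hword : word [x] = takeNodes k x.preo ++ dropNodes k x.preo := by
    simp [takeNodes_append_dropNodes]
  rw [← word_parse_of_append_eq hword, toForest_word_append, toForest_word_append,
    toForest_replicate_none_append]

theorem toForest_dropNodes_le (k : ℕ) (p : List (Option S)) (x : STerm S ar) {m : ℕ} (hm : m ≤ 1)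
    (r : List (Option S)) :
    toForest (ar := ar) (dropNodes k (p ++ none :: (x.preo ++ r))) ≼
      toForest (dropNodes k (p ++ (x.preo ++ (List.replicate m none ++ r)))) := by
  rcases le_or_gt k (nodeCount p) with hp | hp
  · rw [dropNodes_append, dropNodes_append, Nat.sub_eq_zero_of_le hp, dropNodes_zero,
      dropNodes_zero]
    exact toForest_mono (wordLE_jump_preo _ x hm r)
  · obtain ⟨j, hj⟩ : ∃ j, k - nodeCount p = j + 1 := ⟨k - nodeCount p - 1, by omega⟩
    rw [dropNodes_append, dropNodes_append, hj, dropNodes, dropNodes_append, dropNodes_append,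
      dropNodes_eq_nil hp, List.nil_append, List.nil_append]
    rcases le_or_gt (j + 1) (nodeCount x.preo) with hx | hx
    · rw [Nat.sub_eq_zero_of_le hx, dropNodes_zero, dropNodes_zero, toForest_dropNodes_append]
      exact ForestLE.refl _
    · rw [dropNodes_append, dropNodes_eq_nil (w := List.replicate m none) (by simp; omega)]
      simpa using ForestLE.refl _

/-- The pair of reduced forests obtained by cutting a word right after its `k`-th node. -/
def cut (ar : S → ℕ) (k : ℕ) (w : List (Option S)) : List (RTerm S ar) × List (RTerm S ar) :=
  (toForest (takeNodes k w), toForest (dropNodes k w))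

theorem cut_mono (hpos : ∀ g : S, 0 < ar g) (k : ℕ) {L L' : List (STerm S ar)} (h : EWLe L L') :
    (cut ar k (word L)).1 ≼ (cut ar k (word L')).1 ∧
      (cut ar k (word L)).2 ≼ (cut ar k (word L')).2 := by
  induction h with
  | refl => exact ⟨ForestLE.refl _, ForestLE.refl _⟩
  | tail _ hm ih =>
    obtain ⟨p, x, m, r, -, hL, hL', hm⟩ := exists_word_of_forestMove hpos hm
    rw [hL, cut] at ih
    rw [hL', cut]
    exact ⟨ih.1.trans (toForest_mono (wordLE_takeNodes k p x hm r)),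
      ih.2.trans (toForest_dropNodes_le k p x hm r)⟩

/-! ### The under product -/

/-- The number of leaves of a preorder word. -/
def leafCount (w : List (Option S)) : ℕ := w.countP Option.isNone

@[simp]
theorem leafCount_append (u v : List (Option S)) :
    leafCount (u ++ v) = leafCount u + leafCount v :=
  List.countP_append

theorem leafCount_word_ofFn {n : ℕ} (c : Fin n → STerm S ar) :
    leafCount (word (List.ofFn c)) = ∑ i, leafCount (c i).preo := by
  induction n with
  | zero => simp [leafCount]
  | succ n ih => rw [List.ofFn_succ, word_cons, leafCount_append, ih, Fin.sum_univ_succ]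

theorem leafCount_preo (t : STerm S ar) : leafCount t.preo = t.arity := by
  induction t with
  | leaf => simp [leafCount, arity]
  | node g c ih =>
    rw [preo_node, arity, ← Finset.sum_congr rfl fun i _ => ih i, ← leafCount_word_ofFn]
    simp [leafCount]

/-- The word obtained from a preorder word by substituting the entries of a list of terms for its
successive leaves, missing entries being read as leaves. -/
def fillLeaves : List (Option S) → List (STerm S ar) → List (Option S)
  | [], _ => []
  | none :: w, l => (l.headD leaf).preo ++ fillLeaves w l.tail
  | some g :: w, l => some g :: fillLeaves w l

theorem fillLeaves_append (u v : List (Option S)) (l : List (STerm S ar)) :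
    fillLeaves (u ++ v) l = fillLeaves u l ++ fillLeaves v (l.drop (leafCount u)) := by
  fun_induction fillLeaves u l <;> simp_all [fillLeaves, leafCount]

theorem fillLeaves_take {w : List (Option S)} {n : ℕ} (h : leafCount w ≤ n)
    (l : List (STerm S ar)) : fillLeaves w (l.take n) = fillLeaves w l := by
  fun_induction fillLeaves w l generalizing n with
  | case1 => rfl
  | case2 w l ih =>
    obtain ⟨m, rfl⟩ : ∃ m, n = m + 1 := ⟨n - 1, by simp [leafCount] at h; omega⟩
    have hw := ih (n := m) (by simpa [leafCount] using h)
    cases l <;> simp_all [fillLeaves]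
  | case3 g w l ih => rw [fillLeaves, ih (by simpa [leafCount] using h)]

theorem word_ofFn_graftList {n : ℕ} (c : Fin n → STerm S ar)
    (ih : ∀ i l, ((c i).graftList l).preo = fillLeaves (c i).preo l) (l : List (STerm S ar)) :
    word (List.ofFn fun i => (c i).graftList
      ((l.drop (∑ j : Fin n, if (j : ℕ) < (i : ℕ) then (c j).arity else 0)).take (c i).arity)) =
      fillLeaves (word (List.ofFn c)) l := by
  induction n generalizing l with
  | zero => simp [fillLeaves]
  | succ n ihn =>
    have htail := ihn (fun i => c i.succ) (fun i => ih i.succ) (l.drop (c 0).arity)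
    simp only [List.drop_drop] at htail
    simp only [List.ofFn_succ, word_cons, fillLeaves_append, leafCount_preo, ← htail, ih]
    simp [Fin.sum_univ_succ, fillLeaves_take (leafCount_preo _).le]

theorem preo_graftList (t : STerm S ar) (l : List (STerm S ar)) :
    (t.graftList l).preo = fillLeaves t.preo l := by
  induction t generalizing l with
  | leaf => simp [graftList, fillLeaves]
  | node g c ih => rw [graftList, preo_node, word_ofFn_graftList c ih, preo_node, fillLeaves]

theorem fillLeaves_replicate_leaf_append (w : List (Option S)) (l : List (STerm S ar)) :
    fillLeaves w (List.replicate (leafCount w) leaf ++ l) = w := by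
  induction w with
  | nil => rfl
  | cons o w ih =>
    cases o <;> simp_all [fillLeaves, leafCount, List.replicate_succ]

theorem fillLeaves_replicate_none (l : List (STerm S ar)) :
    fillLeaves (List.replicate l.length none) l = word l := by
  induction l with
  | nil => rfl
  | cons t l ih => simp_all [fillLeaves, List.replicate_succ]

theorem exists_eq_append_some_cons {w : List (Option S)} (h : 0 < nodeCount w) :
    ∃ (p : List (Option S)) (g : S) (n : ℕ), w = p ++ some g :: List.replicate n none := by
  induction w with
  | nil => simp at h
  | cons o w ih =>
    rcases Nat.eq_zero_or_pos (nodeCount w) with hw | hw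
    · obtain ⟨n, hn⟩ := exists_dropNodes_nodeCount w
      rw [hw, dropNodes_zero] at hn
      cases o with
      | none => simp [hw] at h
      | some g => exact ⟨[], g, n, by simp [hn]⟩
    · obtain ⟨p, g, n, rfl⟩ := ih hw
      exact ⟨o :: p, g, n, rfl⟩

theorem extremalCount_eq_length_dropNodes {t : STerm S ar} (ht : t ≠ leaf) :
    t.extremalCount = (dropNodes (nodeCount t.preo) t.preo).length := by
  obtain ⟨p, g, n, hw⟩ := exists_eq_append_some_cons (nodeCount_preo_pos ht)
  have hdrop : dropNodes (nodeCount p + 1) p = [] := dropNodes_eq_nil (Nat.lt_succ_self _)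
  rw [extremalCount, hw]
  simp [dropNodes_append, hdrop, dropNodes]

theorem preo_underSub {t : STerm S ar} (ht : t ≠ leaf) {l : List (STerm S ar)}
    (hl : l.length ≤ t.extremalCount) :
    (underSub t l).preo = takeNodes (nodeCount t.preo) t.preo ++
      (word l ++ List.replicate (t.extremalCount - l.length) none) := by
  have hx := extremalCount_eq_length_dropNodes ht
  obtain ⟨e, he⟩ := exists_dropNodes_nodeCount t.preo
  have hpreo := takeNodes_append_dropNodes (nodeCount t.preo) t.preo
  set A := takeNodes (nodeCount t.preo) t.preo
  rw [he, List.length_replicate] at hx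
  rw [he, ← hx] at hpreo
  have harity : t.arity = leafCount A + t.extremalCount := by
    rw [← leafCount_preo, ← hpreo]
    simp [leafCount, List.countP_replicate]
  set M := l ++ List.replicate (t.extremalCount - l.length) leaf
  have hM : M.length = t.extremalCount := by simp [M, hl]
  have hgraft : (List.ofFn (n := t.arity) fun p =>
      if (p : ℕ) < t.arity - t.extremalCount then leaf
      else l.getD ((p : ℕ) - (t.arity - t.extremalCount)) leaf) =
      List.replicate (leafCount A) leaf ++ M := by
    refine List.ext_getElem (by simp [hM, harity]) fun i h₁ h₂ => ?_
    simp only [List.getElem_ofFn, List.getElem_append, List.getD_eq_getElem?_getD, M,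
      List.getElem_replicate, List.length_replicate, harity]
    grind
  rw [underSub, hgraft, preo_graftList, ← hpreo, fillLeaves_append,
    fillLeaves_replicate_leaf_append, List.drop_left' (by simp), ← hM, fillLeaves_replicate_none]
  simp [M]

theorem underSub_ne_leaf {t : STerm S ar} (ht : t ≠ leaf) (l : List (STerm S ar)) :
    underSub t l ≠ leaf := by
  cases t with
  | leaf => exact absurd rfl ht
  | node g c => simp [underSub, graftList]

theorem underP_append_singleton (L M : List (STerm S ar)) (t : STerm S ar) :
    underP (L ++ [t]) M =
      L ++ underSub t (M.take t.extremalCount) :: M.drop t.extremalCount := by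
  simp [underP]

theorem leaf_notMem_underP {L M : List (STerm S ar)} (hL : leaf ∉ L) (hM : leaf ∉ M) :
    leaf ∉ underP L M := by
  rcases L.eq_nil_or_concat' with rfl | ⟨L, t, rfl⟩
  · simpa [underP] using hM
  · rw [List.mem_append, List.mem_singleton, not_or] at hL
    simp only [underP_append_singleton, List.mem_append, List.mem_cons, not_or]
    exact ⟨hL.1, (underSub_ne_leaf (Ne.symm hL.2) _).symm, fun h => hM (List.mem_of_mem_drop h)⟩

theorem exists_word_underP {L : List (STerm S ar)} (hL : leaf ∉ L) (M : List (STerm S ar)) :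
    ∃ n, word (underP L M) =
      takeNodes (nodeCount (word L)) (word L) ++ (word M ++ List.replicate n none) := by
  rcases L.eq_nil_or_concat' with rfl | ⟨L, t, rfl⟩
  · exact ⟨0, by simp [underP]⟩
  · have ht : t ≠ leaf := fun h => hL (by simp [h])
    have htake : takeNodes (nodeCount (word (L ++ [t]))) (word (L ++ [t])) =
        word L ++ takeNodes (nodeCount t.preo) t.preo := by
      have hpos := nodeCount_preo_pos ht
      rw [word_append, word_cons, word_nil, List.append_nil, nodeCount_append, takeNodes_append,
        takeNodes_eq_self (by omega), Nat.add_sub_cancel_left]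
    refine ⟨t.extremalCount - M.length, ?_⟩
    rw [htake, underP_append_singleton, word_append, word_cons,
      preo_underSub ht (List.length_take_le _ _)]
    rcases le_total M.length t.extremalCount with hle | hle
    · simp [List.take_of_length_le hle, List.drop_of_length_le hle]
    · rw [List.length_take_of_le hle, Nat.sub_self, Nat.sub_eq_zero_of_le hle]
      conv_rhs => rw [← List.take_append_drop t.extremalCount M]
      simp only [word_append, List.replicate_zero, List.append_nil, List.append_assoc]

/-! ### Intervals as fibres of the cut -/

/-- The number of nodes of a forest. -/
def nodes (f : List (RTerm S ar)) : ℕ := nodeCount (forestWord f)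

/-- The preorder word of a forest up to its last node. -/
def stem (f : List (RTerm S ar)) : List (Option S) := takeNodes (nodes f) (forestWord f)

theorem exists_forestWord_eq_stem_append (f : List (RTerm S ar)) :
    ∃ n, forestWord f = stem f ++ List.replicate n none := by
  obtain ⟨n, hn⟩ := exists_dropNodes_nodeCount (forestWord f)
  exact ⟨n, by rw [← hn, stem, nodes, takeNodes_append_dropNodes]⟩

theorem cut_stem_append (a : List (RTerm S ar)) (v : List (Option S)) :
    cut ar (nodes a) (stem a ++ v) = (a, toForest v) := by
  obtain ⟨n, hn⟩ := exists_forestWord_eq_stem_append a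
  have ha : toForest (stem a) = a := by
    rw [← toForest_append_replicate_none _ n, ← hn, toForest_forestWord]
  conv_rhs => rw [← ha]
  have hle : nodes a ≤ nodeCount (forestWord a) := le_rfl
  rw [cut, stem, takeNodes_takeNodes_append hle, dropNodes_takeNodes_append hle]

theorem exists_forestWord_append_eq (a b : List (RTerm S ar)) :
    ∃ n, forestWord (a ++ b) = stem a ++ (List.replicate n none ++ forestWord b) := by
  obtain ⟨n, hn⟩ := exists_forestWord_eq_stem_append a
  exact ⟨n, by rw [forestWord_append, hn, List.append_assoc]⟩

theorem cut_forestWord_append (a b : List (RTerm S ar)) :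
    cut ar (nodes a) (forestWord (a ++ b)) = (a, b) := by
  obtain ⟨n, hn⟩ := exists_forestWord_append_eq a b
  rw [hn, cut_stem_append, toForest_replicate_none_append, toForest_forestWord]

theorem cut_word_underP (a b : List (RTerm S ar)) :
    cut ar (nodes a) (word (underP (a.map Subtype.val) (b.map Subtype.val))) = (a, b) := by
  obtain ⟨n, hn⟩ := exists_word_underP (leaf_notMem_map_val a) (b.map Subtype.val)
  rw [word_map_val, word_map_val, ← nodes, ← stem] at hn
  rw [hn, cut_stem_append, toForest_append_replicate_none, toForest_forestWord]

theorem exists_forestWord_eq_of_cut_eq {a b h : List (RTerm S ar)}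
    (hcut : cut ar (nodes a) (forestWord h) = (a, b)) :
    ∃ L : List (STerm S ar), forestWord h = stem a ++ word L ∧ rdF L = b := by
  have hsplit := takeNodes_append_dropNodes (nodes a) (forestWord h)
  obtain ⟨ha, hb⟩ := Prod.ext_iff.1 hcut
  simp only [cut] at ha hb
  set u := takeNodes (nodes a) (forestWord h) with hu
  set v := dropNodes (nodes a) (forestWord h)
  have hleaf : leaf ∉ parse (ar := ar) u := by
    refine leaf_notMem_parse_of_append (v := v) ?_
    rw [hsplit, forestWord, parse_word]
    exact leaf_notMem_map_val h
  obtain ⟨n, hn⟩ := exists_word_parse_eq (ar := ar) u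
  have hword : forestWord a = u ++ List.replicate n none := by
    rw [← hn, ← map_val_rdF hleaf, ← toForest, ha, word_map_val]
  have hcount : nodes a = nodeCount u := by
    rw [nodes, hword, nodeCount_append, nodeCount_replicate_none, add_zero]
  have hstem : stem a = u := by
    rw [stem, hword, hu]
    refine takeNodes_takeNodes_append ?_ _
    rw [← hsplit, nodeCount_append, ← hcount]
    exact Nat.le_add_right _ _
  exact ⟨parse v, by rw [hstem, word_parse_of_append_eq hsplit.symm, hsplit], hb⟩

theorem mem_interval_iff_cut_eq (hpos : ∀ g : S, 0 < ar g) {a b h : List (RTerm S ar)} :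
    (a ++ b ≼ h ∧ EWLe (h.map Subtype.val) (underP (a.map Subtype.val) (b.map Subtype.val))) ↔
      cut ar (nodes a) (forestWord h) = (a, b) := by
  constructor
  · rintro ⟨hover, hunder⟩
    have hlower := cut_mono hpos (nodes a) hover
    have hupper := cut_mono hpos (nodes a) hunder
    rw [word_map_val, word_map_val, cut_forestWord_append] at hlower
    rw [word_map_val, cut_word_underP] at hupper
    exact Prod.ext (ForestLE.antisymm hpos hupper.1 hlower.1)
      (ForestLE.antisymm hpos hupper.2 hlower.2)
  · intro hcut
    obtain ⟨L, hword, rfl⟩ := exists_forestWord_eq_of_cut_eq hcut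
    constructor
    · obtain ⟨m, hm⟩ := exists_forestWord_eq_stem_append a
      have hle := toForest_mono ((wordLE_replicate_none_append_forestWord
        (Nat.le_add_left L.length m)).append_left (stem a))
      rw [List.replicate_add, List.append_assoc, ← List.append_assoc (stem a), ← hm,
        toForest_forestWord_append, toForest_replicate_none_append, toForest_forestWord, ← hword,
        toForest_forestWord] at hle
      exact hle
    · obtain ⟨n, hn⟩ := exists_word_underP (leaf_notMem_map_val a) ((rdF L).map Subtype.val)
      have hle := toForest_mono (((wordLE_forestWord_rdF L).append_left (stem a)).trans
        ((wordLE_pad _ n).append_left (stem a)))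
      rw [word_map_val, word_map_val, ← nodes, ← stem] at hn
      rw [← hword, toForest_forestWord, ← hn, toForest, parse_word] at hle
      rwa [ForestLE, map_val_rdF (leaf_notMem_underP (leaf_notMem_map_val a)
        (leaf_notMem_map_val _))] at hle

theorem nodeCount_word_eq_of_ewLe (hpos : ∀ g : S, 0 < ar g) {L L' : List (STerm S ar)}
    (h : EWLe L L') : nodeCount (word L) = nodeCount (word L') := by
  induction h with
  | refl => rfl
  | tail _ hm ih =>
    obtain ⟨p, x, m, r, -, hL, hL', -⟩ := exists_word_of_forestMove hpos hm
    rw [ih, hL, hL']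
    simp

theorem forestLE_and_cut_eq_iff (hpos : ∀ g : S, 0 < ar g) {a b h : List (RTerm S ar)}
    {x : List (RTerm S ar) × List (RTerm S ar)} (ha : a ≼ x.1) (hb : b ≼ x.2) :
    (a ++ b ≼ h ∧ cut ar (nodes a) (forestWord h) = x) ↔
      cut ar (nodes x.1) (forestWord h) = x := by
  have hnodes : nodes a = nodes x.1 := nodeCount_word_eq_of_ewLe hpos ha
  rw [hnodes]
  exact and_iff_right_of_imp fun hx =>
    (ha.append hb).trans ((mem_interval_iff_cut_eq hpos).2 hx).1

/-- The easterly wind order of a positive signature. -/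
abbrev easterlyWindOrder (hpos : ∀ g : S, 0 < ar g) : PartialOrder (List (RTerm S ar)) where
  le := ForestLE
  le_refl := ForestLE.refl
  le_trans _ _ _ := ForestLE.trans
  le_antisymm _ _ := ForestLE.antisymm hpos

open scoped Classical in
/-- The upper sets of the easterly wind order as finite sets. -/
noncomputable abbrev easterlyWindUpperSets (hpos : ∀ g : S, 0 < ar g) :
    letI := easterlyWindOrder hpos
    LocallyFiniteOrderTop (List (RTerm S ar)) :=
  letI := easterlyWindOrder hpos
  LocallyFiniteOrderTop.ofIci _ (fun f => (finite_setOf_forestLE hpos f).toFinset)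
    fun f _ => (finite_setOf_forestLE hpos f).mem_toFinset

theorem eBasis_mul (𝕂 : Type) [CommSemiring 𝕂] (f g : List (RTerm S ar)) :
    EBasis 𝕂 f * EBasis 𝕂 g = EBasis 𝕂 (f ++ g) := by
  unfold EBasis
  rw [← map_mul]
  rfl

theorem mul_eq_finsum_cut {R : Type*} [NonUnitalNonAssocSemiring R] [IsCancelAdd R]
    (hpos : ∀ g : S, 0 < ar g)
    {E F : List (RTerm S ar) → R} (hmul : ∀ a b, E a * E b = E (a ++ b))
    (hEF : ∀ f, E f = ∑ᶠ h ∈ {h | f ≼ h}, F h) (a b : List (RTerm S ar)) :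
    F a * F b = ∑ᶠ h ∈ {h | cut ar (nodes a) (forestWord h) = (a, b)}, F h := by
  classical
  let := easterlyWindOrder hpos
  let := easterlyWindUpperSets hpos
  have hE (f : List (RTerm S ar)) : E f = ∑ h ∈ Finset.Ici f, F h := by
    rw [hEF, ← finsum_mem_coe_finset, Finset.coe_Ici]
    rfl
  suffices h : (fun x : List (RTerm S ar) × List (RTerm S ar) => F x.1 * F x.2) = fun x =>
      ∑ᶠ h ∈ {h | cut ar (nodes x.1) (forestWord h) = x}, F h from congrFun h (a, b)
  refine eq_of_forall_sum_Ici_eq fun ⟨a, b⟩ => ?_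
  have hfibre : ∀ x ∈ Finset.Ici (a, b),
      ∑ᶠ h ∈ {h | cut ar (nodes x.1) (forestWord h) = x}, F h =
        ∑ h ∈ Finset.Ici (a ++ b) with cut ar (nodes a) (forestWord h) = x, F h := by
    intro x hx
    obtain ⟨ha, hb⟩ := Finset.mem_Ici.1 hx
    rw [← finsum_mem_coe_finset]
    congr! 3 with h
    rw [Finset.mem_coe, Finset.mem_filter, Finset.mem_Ici]
    exact (forestLE_and_cut_eq_iff hpos ha hb).symm
  have hmaps : ∀ h ∈ Finset.Ici (a ++ b), cut ar (nodes a) (forestWord h) ∈ Finset.Ici (a, b) := by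
    intro h hh
    have hle := cut_mono hpos (nodes a) (Finset.mem_Ici.1 hh)
    rw [word_map_val, word_map_val, cut_forestWord_append] at hle
    exact Finset.mem_Ici.2 hle
  rw [Finset.sum_congr rfl hfibre, Finset.sum_fiberwise_of_maps_to hmaps, ← hE, ← hmul, hE, hE,
    Finset.sum_mul_sum, ← Finset.sum_product', Finset.Ici_product_Ici]

end EasterlyWind

theorem Fbasis_product_general {S : Type} {ar : S → ℕ} (hpos : ∀ g : S, 0 < ar g) {R : Type*}
    [NonUnitalNonAssocSemiring R] [IsCancelAdd R] {E F : List (RTerm S ar) → R}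
    (hmul : ∀ f g, E f * E g = E (f ++ g))
    (hF : ∀ f : List (RTerm S ar),
      E f = ∑ᶠ f' ∈ {f' : List (RTerm S ar) |
        EWLe (f.map Subtype.val) (f'.map Subtype.val)}, F f')
    (f' f'' : List (RTerm S ar)) :
    F f' * F f'' =
      ∑ᶠ f ∈ {f : List (RTerm S ar) |
          EWLe ((f' ++ f'').map Subtype.val) (f.map Subtype.val) ∧
          EWLe (f.map Subtype.val) (underP (f'.map Subtype.val) (f''.map Subtype.val))},
        F f := by
  rw [EasterlyWind.mul_eq_finsum_cut hpos hmul hF]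
  congr! 3 with f
  exact (EasterlyWind.mem_interval_iff_cut_eq hpos).symm

/-- product rule for the fundamental basis `F`. The family `F` is characterized
(by Möbius inversion for the easterly wind order, whose upper sets are finite) by
`E_f = Σ_{f ≼ f'} F_{f'}`; then `F_{f'} · F_{f''} = Σ_{f' ▽ f'' ≼ f ≼ f' △ f''} F_f`. -/
theorem Fbasis_product {S : Type} {ar : S → ℕ} (hpos : ∀ g : S, 0 < ar g)
    (𝕂 : Type) [Field 𝕂] [CharZero 𝕂]
    (F : List (RTerm S ar) → NAlg 𝕂 S ar)
    (hF : ∀ f : List (RTerm S ar),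
      EBasis 𝕂 f =
        ∑ᶠ f' ∈ {f' : List (RTerm S ar) |
            EWLe (f.map Subtype.val) (f'.map Subtype.val)}, F f')
    (f' f'' : List (RTerm S ar)) :
    F f' * F f'' =
      ∑ᶠ f ∈ {f : List (RTerm S ar) |
          EWLe ((f' ++ f'').map Subtype.val) (f.map Subtype.val) ∧
          EWLe (f.map Subtype.val) (underP (f'.map Subtype.val) (f''.map Subtype.val))},
        F f :=
  Fbasis_product_general hpos (EasterlyWind.eBasis_mul 𝕂) hF f' f''
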